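/- For every subshift Σ, the entropy of minimal forbidden words satisfies h_ℳ(Σ) ≤ h_𝒞(Σ), and there exists a subshift with h_ℳ(Σ) < h_𝒞(Σ). Moreover, both h_ℳ(Σ) > h*_𝒞(Σ) and h_ℳ(Σ) < h*_𝒞(Σ) occur for suitable subshifts Σ. -/

import Mathlib

open Filter Set MeasureTheory

namespace QFTPaper

variable {A : Type*} {B : Type*}

/-- The left shift on bi-infinite sequences over the alphabet `A`. -/
def shift (x : ℤ → A) : ℤ → A := fun n => x (n + 1)

/-- A subshift: a closed, shift-invariant subset of `A^ℤ`. -/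
def IsSubshift [TopologicalSpace A] (X : Set (ℤ → A)) : Prop :=
  IsClosed X ∧ shift '' X = X

/-- The finite word `w` occurs in `x` at position `k`. -/
def OccursAt (w : List A) (x : ℤ → A) (k : ℤ) : Prop :=
  ∀ i : Fin w.length, x (k + (i : ℕ)) = w.get i

/-- The language of `X`: words of length `n` occurring in elements of `X`
(at position `0`, which is no restriction by shift-invariance). -/
def Lang (X : Set (ℤ → A)) (n : ℕ) : Set (List A) :=
  { w | w.length = n ∧ ∃ x ∈ X, OccursAt w x 0 }

/-- Topological entropy of a subshift. -/
noncomputable def hTop (X : Set (ℤ → A)) : ℝ :=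
  limsup (fun n : ℕ => Real.log (Nat.card ↥(Lang X n)) / (n : ℝ)) atTop

/-- Follower set of the finite word `w = A₋ₙ…A₀` (listed from `A₋ₙ` to `A₀`):
the set of one-sided sequences `B₀B₁B₂…` with `B ∈ X` and `B₋ₙ…B₀ = A₋ₙ…A₀`,
realized by requiring `w` to occur in `B` at positions `0,…,n` and reading off
the tail of `B` starting at the position of the last letter of `w`.
For the empty word this gives `X₊` (by shift-invariance). -/
def fol (X : Set (ℤ → A)) (w : List A) : Set (ℕ → A) :=
  { y | ∃ B ∈ X, (∀ i : Fin w.length, B ((i : ℕ) : ℤ) = w.get i) ∧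
        ∀ k : ℕ, y k = B ((w.length : ℤ) - 1 + (k : ℤ)) }

/-- `w = A₋ₙ…A₀` is a left constraint:
`∅ ≠ fol(A₋ₙ…A₀) ⊊ fol(A₋ₙ₊₁…A₀)`. -/
def IsLeftConstraint (X : Set (ℤ → A)) (w : List A) : Prop :=
  w ≠ [] ∧ fol X w ≠ ∅ ∧ fol X w ⊂ fol X w.tail

/-- `𝒞(X, n)`: the set of left constraints of length `n`. -/
def LC (X : Set (ℤ → A)) (n : ℕ) : Set (List A) :=
  { w | w.length = n ∧ IsLeftConstraint X w }

/-- The left constraint entropy `h_𝒞(X) = limsup (1/n) log⁺ #𝒞(X,n)`. -/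
noncomputable def hC (X : Set (ℤ → A)) : ℝ :=
  limsup (fun n : ℕ => max 0 (Real.log (Nat.card ↥(LC X n))) / (n : ℝ)) atTop

/-- The time-reversed subshift `X̄`. -/
def rev (X : Set (ℤ → A)) : Set (ℤ → A) :=
  (fun x : ℤ → A => fun n : ℤ => x (-n)) '' X

/-- The symmetric constraint entropy `h_𝒮𝒞(X) = min (h_𝒞(X), h_𝒞(X̄))`. -/
noncomputable def hSC (X : Set (ℤ → A)) : ℝ := min (hC X) (hC (rev X))

/-- Subshift of quasi-finite type: `h_𝒮𝒞(X) < h_top(X)`. -/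
def IsQFT [TopologicalSpace A] (X : Set (ℤ → A)) : Prop :=
  IsSubshift X ∧ hSC X < hTop X

/-- The word `B₋ₘ…B₀` read off from a one-sided past `b` (where `b j = B₋ⱼ`). -/
def wordOf (b : ℕ → A) (m : ℕ) : List A :=
  (List.range (m + 1)).map fun j => b (m - j)

/-- An extendable left constraint: a left constraint `A₋ₙ…A₀` which admits a
one-sided past `B` extending it such that `B₋ₘ…B₀` is again a left constraint
for infinitely many `m`. -/
def IsExtendable (X : Set (ℤ → A)) (w : List A) : Prop :=
  IsLeftConstraint X w ∧
  ∃ b : ℕ → A, wordOf b (w.length - 1) = w ∧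
    ∀ N : ℕ, ∃ m, N ≤ m ∧ IsLeftConstraint X (wordOf b m)

/-- `𝒞*(X, n)`: the set of extendable left constraints of length `n`. -/
def ELC (X : Set (ℤ → A)) (n : ℕ) : Set (List A) :=
  { w | w.length = n ∧ IsExtendable X w }

/-- The extendable left constraint entropy `h*_𝒞(X)`. -/
noncomputable def hCstar (X : Set (ℤ → A)) : ℝ :=
  limsup (fun n : ℕ => Real.log (Nat.card ↥(ELC X n)) / (n : ℝ)) atTop

/-- `h*_𝒮𝒞(X) = min (h*_𝒞(X), h*_𝒞(X̄))`. -/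
noncomputable def hSCstar (X : Set (ℤ → A)) : ℝ := min (hCstar X) (hCstar (rev X))

/-- Subshift of weak quasi-finite type: `h*_𝒮𝒞(X) < h_top(X)`. -/
def IsWeakQFT [TopologicalSpace A] (X : Set (ℤ → A)) : Prop :=
  IsSubshift X ∧ hSCstar X < hTop X

/-- Subshift of finite type: defined by excluding a finite set of finite words. -/
def IsSFT (X : Set (ℤ → A)) : Prop :=
  ∃ F : Finset (List A), X = { x | ∀ w ∈ F, ∀ k : ℤ, ¬ OccursAt w x k }

/-- Sofic subshift: the image of an SFT under a continuous shift-commuting map. -/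
def IsSofic [TopologicalSpace A] (X : Set (ℤ → A)) : Prop :=
  ∃ (B : Type) (_ : Fintype B) (Y : Set (ℤ → B)) (π : (ℤ → B) → (ℤ → A)),
    IsSFT Y ∧
    (letI : TopologicalSpace B := ⊥
     Continuous π) ∧
    (∀ x : ℤ → B, π (shift x) = shift (π x)) ∧ π '' Y = X


/-- Topological conjugacy of subshifts: a homeomorphism commuting with the shifts. -/
def Conjugate [TopologicalSpace A] [TopologicalSpace B]
    (X : Set (ℤ → A)) (Y : Set (ℤ → B)) : Prop :=
  ∃ φ : X ≃ₜ Y, ∀ x x' : X, (x' : ℤ → A) = shift (x : ℤ → A) →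
    (φ x' : ℤ → B) = shift (φ x : ℤ → B)

/-- The cylinder of a word of length `n` placed at positions `0,…,n-1`. -/
def cylSet (n : ℕ) (w : Fin n → A) : Set (ℤ → A) :=
  { x | ∀ i : Fin n, x ((i : ℕ) : ℤ) = w i }

/-- Entropy of the partition of `A^ℤ` into cylinders of length `n`. -/
noncomputable def blockEntropy [Fintype A] [MeasurableSpace A]
    (μ : Measure (ℤ → A)) (n : ℕ) : ℝ :=
  ∑ w : Fin n → A, Real.negMulLog ((μ (cylSet n w)).toReal)

/-- Kolmogorov–Sinai entropy of a shift-invariant measure on `A^ℤ`,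
computed with the natural (generating) partition into cylinders. -/
noncomputable def KSEntropy [Fintype A] [MeasurableSpace A]
    (μ : Measure (ℤ → A)) : ℝ :=
  ⨅ n : ℕ, blockEntropy μ (n + 1) / (n + 1)

/-- A maximum measure: an ergodic shift-invariant Borel probability measure
carried by `X` whose Kolmogorov–Sinai entropy equals the topological entropy of `X`. -/
def IsMaxMeasure [Fintype A] [MeasurableSpace A]
    (X : Set (ℤ → A)) (μ : Measure (ℤ → A)) : Prop :=
  IsProbabilityMeasure μ ∧ μ Xᶜ = 0 ∧ Ergodic shift μ ∧ KSEntropy μ = hTop X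

/-- The number of points of `X` fixed by the `n`-th power of the shift. -/
noncomputable def perCount (X : Set (ℤ → A)) (n : ℕ) : ℕ :=
  Nat.card {x : ℤ → A | x ∈ X ∧ shift^[n] x = x}

/-- The set of minimal forbidden words of length `n`: words not occurring in
`X` both of whose maximal proper subwords occur in `X`. -/
def MinForbidden (X : Set (ℤ → A)) (n : ℕ) : Set (List A) :=
  { w | w.length = n ∧ w ∉ Lang X n ∧
        w.dropLast ∈ Lang X (n - 1) ∧ w.tail ∈ Lang X (n - 1) }

/-- The entropy of minimal forbidden words `h_ℳ(X)`. -/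
noncomputable def hM (X : Set (ℤ → A)) : ℝ :=
  limsup (fun n : ℕ =>
    max 0 (Real.log (Nat.card ↥(MinForbidden X n))) / (n : ℝ)) atTop

/-!
If `c u a` is a minimal forbidden word, then some point of `X` extending `u a` cannot be preceded by
`c`, so that `c u` is a left constraint. Hence there are at most `|A|` times as many minimal
forbidden words of length `n + 1` as left constraints of length `n`, and `h_ℳ ≤ h_𝒞`.

For the examples, let `X` be the subshift avoiding a set `F` of words none of which contains another
one, and suppose that some letter neither begins nor ends a word of `F`. Then the minimal forbidden
words of `X` are exactly the words of `F`, and its left constraints of length at least two are the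
proper prefixes of such words.

* The words `2u2`, with `u` over `{0, 1}`, have growth rate `log 2`. The letter `2` begins each left
  constraint of length at least two and occurs nowhere else in it, so none is extendable.
* The words `1u0ᵏ2`, with `u` over `{0, 1}` and `k = 2 ^ |u|`, have growth rate `0` because of the
  long block of zeros. But each `1u` is a left constraint, extendable by the past `…111u`.
-/

/-! ### Exponential growth rates -/

/-- The exponential growth rate `limsup (1/n) log u n` of a sequence of natural numbers. As
`Real.log 0 = 0` and `Real.log` is nonnegative on `ℕ`, it makes no difference whether `log` or
`log⁺` is used here, so that `hM`, `hC` and `hCstar` are all growth rates of this form. -/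
noncomputable def growthRate (u : ℕ → ℕ) : ℝ :=
  limsup (fun n : ℕ => Real.log (u n) / n) atTop

section GrowthRate

open scoped Topology

variable {u v : ℕ → ℕ} {K : ℕ}

theorem log_natCast_le_log_natCast {m n : ℕ} (h : m ≤ n) : Real.log m ≤ Real.log n := by
  rcases m.eq_zero_or_pos with rfl | hm
  · simpa using Real.log_natCast_nonneg n
  · exact Real.log_le_log (by exact_mod_cast hm) (by exact_mod_cast h)

theorem log_natCast_mul_le (m n : ℕ) :
    Real.log (m * n : ℕ) ≤ Real.log m + Real.log n := by
  rcases eq_or_ne m 0 with rfl | hm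
  · simpa using Real.log_natCast_nonneg n
  rcases eq_or_ne n 0 with rfl | hn
  · simpa using Real.log_natCast_nonneg m
  · rw [Nat.cast_mul, Real.log_mul (by exact_mod_cast hm) (by exact_mod_cast hn)]

theorem log_div_nonneg (m n : ℕ) : 0 ≤ Real.log m / n :=
  div_nonneg (Real.log_natCast_nonneg m) n.cast_nonneg

theorem log_div_le_of_le_pow {m n : ℕ} (h : m ≤ K ^ n) : Real.log m / n ≤ Real.log K := by
  refine div_le_of_le_mul₀ n.cast_nonneg (Real.log_natCast_nonneg K) ?_
  calc Real.log m ≤ Real.log (K ^ n : ℕ) := log_natCast_le_log_natCast h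
    _ = Real.log K * n := by rw [Nat.cast_pow, Real.log_pow, mul_comm]

theorem isBoundedUnder_log_div (hu : ∀ n, u n ≤ K ^ n) :
    IsBoundedUnder (· ≤ ·) atTop fun n : ℕ => Real.log (u n) / n :=
  isBoundedUnder_of ⟨_, fun n => log_div_le_of_le_pow (hu n)⟩

theorem isCoboundedUnder_log_div (u : ℕ → ℕ) :
    IsCoboundedUnder (· ≤ ·) atTop fun n : ℕ => Real.log (u n) / n :=
  IsBoundedUnder.isCoboundedUnder_le (isBoundedUnder_of ⟨0, fun n => log_div_nonneg (u n) n⟩)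

theorem growthRate_le_of_add_le_mul {C k : ℕ} (hv : ∀ n, v n ≤ K ^ n)
    (h : ∀ᶠ n in atTop, u (n + k) ≤ C * v n) : growthRate u ≤ growthRate v := by
  have hC : Tendsto (fun n : ℕ => Real.log C / n) atTop (𝓝 0) :=
    tendsto_const_div_atTop_nhds_zero_nat _
  have hle : ∀ᶠ n : ℕ in atTop,
      Real.log (u (n + k)) / (n + k : ℕ) ≤ Real.log C / n + Real.log (v n) / n := by
    filter_upwards [h, eventually_gt_atTop 0] with n hn hn0
    calc Real.log (u (n + k)) / (n + k : ℕ) ≤ Real.log (u (n + k)) / n :=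
          div_le_div_of_nonneg_left (Real.log_natCast_nonneg _) (by exact_mod_cast hn0)
            (by exact_mod_cast n.le_add_right k)
      _ ≤ (Real.log C + Real.log (v n)) / n := by
          gcongr
          exact (log_natCast_le_log_natCast hn).trans (log_natCast_mul_le _ _)
      _ = Real.log C / n + Real.log (v n) / n := add_div _ _ _
  calc growthRate u
      = limsup (fun n : ℕ => Real.log (u (n + k)) / (n + k : ℕ)) atTop :=
        (limsup_nat_add (fun n : ℕ => Real.log (u n) / n) k).symm
    _ ≤ limsup (fun n : ℕ => Real.log C / n + Real.log (v n) / n) atTop :=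
        limsup_le_limsup hle
          (IsBoundedUnder.isCoboundedUnder_le
            (isBoundedUnder_of ⟨0, fun n => log_div_nonneg (u (n + k)) (n + k)⟩))
          (isBoundedUnder_le_add hC.isBoundedUnder_le (isBoundedUnder_log_div hv))
    _ ≤ limsup (fun n : ℕ => Real.log C / n) atTop + growthRate v :=
        limsup_add_le hC.isBoundedUnder_ge hC.isBoundedUnder_le
          (isCoboundedUnder_log_div v) (isBoundedUnder_log_div hv)
    _ = growthRate v := by rw [hC.limsup_eq, zero_add]

theorem log_le_growthRate {b k : ℕ} (hu : ∀ n, u n ≤ K ^ n)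
    (h : ∀ᶠ n in atTop, b ^ n ≤ u (n + k)) : Real.log b ≤ growthRate u := by
  have hlim : growthRate (fun n => b ^ n) = Real.log b := by
    refine Tendsto.limsup_eq (tendsto_const_nhds.congr' ?_)
    filter_upwards [eventually_ne_atTop 0] with n hn
    rw [Nat.cast_pow, Real.log_pow, mul_div_cancel_left₀ _ (by exact_mod_cast hn)]
  rw [← hlim]
  refine growthRate_le_of_add_le_mul (C := b ^ k) (k := 0) hu ?_
  filter_upwards [(tendsto_sub_atTop_nat k).eventually h, eventually_ge_atTop k] with n hn hkn
  calc b ^ (n + 0) = b ^ k * b ^ (n - k) := by rw [← pow_add, add_zero, Nat.add_sub_cancel' hkn]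
    _ ≤ b ^ k * u n := by
        rw [Nat.sub_add_cancel hkn] at hn
        exact Nat.mul_le_mul_left _ hn

theorem growthRate_eq_zero_of_le_self (h : ∀ n, u n ≤ n) : growthRate u = 0 := by
  have hlog : Tendsto (fun n : ℕ => Real.log n / n) atTop (𝓝 0) :=
    Real.isLittleO_log_id_atTop.tendsto_div_nhds_zero.comp tendsto_natCast_atTop_atTop
  refine (squeeze_zero (fun n => log_div_nonneg (u n) n) (fun n => ?_) hlog).limsup_eq
  exact div_le_div_of_nonneg_right (log_natCast_le_log_natCast (h n)) n.cast_nonneg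

end GrowthRate

section Counting

variable {S : Set (List A)} {n : ℕ}

theorem natCard_length_eq [Finite A] (n : ℕ) :
    Nat.card {w : List A | w.length = n} = Nat.card A ^ n := by
  have := Fintype.ofFinite A
  rw [Nat.card_eq_fintype_card (α := A), ← card_vector]
  exact Nat.card_eq_fintype_card (α := List.Vector A n)

theorem natCard_le_pow [Finite A] (hS : ∀ w ∈ S, w.length = n) : Nat.card S ≤ Nat.card A ^ n :=
  (Nat.card_mono (List.finite_length_eq A n) hS).trans_eq (natCard_length_eq n)

theorem pow_le_natCard [Finite A] [Finite B] {m : ℕ} (hS : ∀ w ∈ S, w.length = m)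
    {g : List B → List A} (hg : g.Injective) (hgS : ∀ w : List B, w.length = n → g w ∈ S) :
    Nat.card B ^ n ≤ Nat.card S := by
  rw [← natCard_length_eq, ← Nat.card_image_of_injective hg]
  exact Nat.card_mono ((List.finite_length_eq A m).subset hS) (image_subset_iff.2 hgS)

theorem log_natCard_le_growthRate [Finite A] [Finite B] {T : ℕ → Set (List A)} {k : ℕ}
    (hT : ∀ n, ∀ w ∈ T n, w.length = n) {g : List B → List A} (hg : g.Injective)
    (hgT : ∀ w : List B, g w ∈ T (w.length + k)) :
    Real.log (Nat.card B) ≤ growthRate fun n => Nat.card (T n) :=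
  log_le_growthRate (k := k) (fun n => natCard_le_pow (hT n)) <| Eventually.of_forall fun n =>
    pow_le_natCard (hT (n + k)) hg fun w hw => hw ▸ hgT w

end Counting

/-! ### The inequality `h_ℳ ≤ h_𝒞` -/

theorem hM_eq_growthRate (X : Set (ℤ → A)) :
    hM X = growthRate fun n => Nat.card (MinForbidden X n) := by
  simp only [hM, growthRate, max_eq_right (Real.log_natCast_nonneg _)]

theorem hC_eq_growthRate (X : Set (ℤ → A)) :
    hC X = growthRate fun n => Nat.card (LC X n) := by
  simp only [hC, growthRate, max_eq_right (Real.log_natCast_nonneg _)]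

theorem hCstar_eq_growthRate (X : Set (ℤ → A)) :
    hCstar X = growthRate fun n => Nat.card (ELC X n) := rfl

section OccursAt

variable {x y : ℤ → A} {k l : ℤ} {c : A} {u v w : List A}

theorem occursAt_nil (x : ℤ → A) (k : ℤ) : OccursAt [] x k := fun i => i.elim0

theorem occursAt_cons : OccursAt (c :: w) x k ↔ x k = c ∧ OccursAt w x (k + 1) := by
  simp [OccursAt, Fin.forall_fin_succ, add_assoc, add_comm (1 : ℤ)]

theorem occursAt_append :
    OccursAt (u ++ w) x k ↔ OccursAt u x k ∧ OccursAt w x (k + u.length) := by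
  induction u generalizing k with
  | nil => simp [occursAt_nil]
  | cons c u ih =>
    rw [List.cons_append, occursAt_cons, ih, occursAt_cons, and_assoc, List.length_cons,
      Nat.cast_succ, add_assoc, add_comm (1 : ℤ)]

theorem occursAt_congr (h : ∀ i : ℕ, x (k + i) = y (l + i)) : OccursAt w x k ↔ OccursAt w y l :=
  forall_congr' fun i => by rw [h i]

theorem OccursAt.isPrefix (hu : OccursAt u x k) (hv : OccursAt v x k)
    (h : u.length ≤ v.length) : u <+: v := by
  induction u generalizing k v with
  | nil => exact List.nil_prefix
  | cons c u ih =>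
    obtain _ | ⟨d, v⟩ := v
    · simp at h
    · rw [occursAt_cons] at hu hv
      obtain rfl : c = d := hu.1.symm.trans hv.1
      exact List.cons_prefix_cons.2 ⟨rfl, ih hu.2 hv.2 (Nat.le_of_succ_le_succ h)⟩

theorem OccursAt.isInfix {n : ℕ} (hw : OccursAt w x k) (hu : OccursAt u x (k + n))
    (h : n + u.length ≤ w.length) : u <:+: w := by
  rw [← List.take_append_drop n w, occursAt_append, List.length_take_of_le (by omega)] at hw
  have hpre : u <+: w.drop n := hu.isPrefix hw.2 (by rw [List.length_drop]; omega)
  exact hpre.isInfix.trans (List.drop_suffix n w).isInfix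

end OccursAt

section FollowerSets

variable {X : Set (ℤ → A)} {c : A} {v w : List A}

theorem mem_fol_iff {y : ℕ → A} : y ∈ fol X w ↔
    ∃ x ∈ X, OccursAt w x 0 ∧ ∀ k : ℕ, y k = x (w.length - 1 + k) := by
  simp [fol, OccursAt]

theorem fol_nonempty_iff : (fol X w).Nonempty ↔ ∃ x ∈ X, OccursAt w x 0 := by
  constructor
  · rintro ⟨y, hy⟩
    obtain ⟨x, hx, hw, -⟩ := mem_fol_iff.1 hy
    exact ⟨x, hx, hw⟩
  · rintro ⟨x, hx, hw⟩
    exact ⟨_, mem_fol_iff.2 ⟨x, hx, hw, fun _ => rfl⟩⟩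

theorem fol_cons_subset (hX : MapsTo shift X X) (c : A) (v : List A) :
    fol X (c :: v) ⊆ fol X v := by
  intro y hy
  obtain ⟨x, hx, hocc, hy⟩ := mem_fol_iff.1 hy
  refine mem_fol_iff.2 ⟨shift x, hX hx, ?_, fun k => ?_⟩
  · refine (occursAt_congr fun i => ?_).1 (occursAt_cons.1 hocc).2
    rw [shift]
    ring_nf
  · rw [hy k, shift, List.length_cons]
    push_cast
    ring_nf

theorem isLeftConstraint_cons_iff (hX : MapsTo shift X X) : IsLeftConstraint X (c :: v) ↔
    (∃ x ∈ X, OccursAt (c :: v) x 0) ∧ ¬ fol X v ⊆ fol X (c :: v) := by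
  rw [IsLeftConstraint, ← nonempty_iff_ne_empty, fol_nonempty_iff, List.tail_cons, ssubset_def]
  simp [fol_cons_subset hX]

theorem exists_extension_of_fol_subset (h : fol X v ⊆ fol X (c :: v)) {x : ℤ → A} (hx : x ∈ X)
    (hv : OccursAt v x 0) : ∃ x' ∈ X, x' 0 = c ∧ ∀ j : ℕ, x' (j + 1) = x j := by
  obtain ⟨x', hx', hocc, hfol⟩ :=
    mem_fol_iff.1 (h (mem_fol_iff.2 ⟨x, hx, hv, fun _ => rfl⟩))
  obtain ⟨hc, hv'⟩ := occursAt_cons.1 hocc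
  refine ⟨x', hx', hc, fun j => ?_⟩
  rcases lt_or_ge j v.length with hj | hj
  · have := (hv' ⟨j, hj⟩).trans (hv ⟨j, hj⟩).symm
    simpa [add_comm] using this
  · have := hfol (j + 1 - v.length)
    rw [List.length_cons] at this
    push_cast [Nat.le_succ_of_le hj] at this
    ring_nf at this ⊢
    exact this.symm

theorem fol_subset_of_exists_extension (hv : v ≠ [])
    (h : ∀ x ∈ X, OccursAt v x 0 → ∃ x' ∈ X, x' 0 = c ∧ ∀ j : ℕ, x' (j + 1) = x j) :
    fol X v ⊆ fol X (c :: v) := by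
  intro y hy
  obtain ⟨x, hx, hocc, hy⟩ := mem_fol_iff.1 hy
  obtain ⟨x', hx', hc, hx'x⟩ := h x hx hocc
  refine mem_fol_iff.2 ⟨x', hx', occursAt_cons.2 ⟨hc, ?_⟩, fun k => ?_⟩
  · refine (occursAt_congr fun i => ?_).1 hocc
    rw [zero_add, zero_add, add_comm, hx'x]
  · have hpos : 1 ≤ v.length := List.length_pos_iff.2 hv
    have := hx'x (v.length - 1 + k)
    rw [hy k, List.length_cons]
    push_cast [hpos] at this ⊢
    rw [← this]
    ring_nf

theorem isLeftConstraint_of_minForbidden (hX : MapsTo shift X X) {n : ℕ} {u : List A} {a : A}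
    (h : c :: (u ++ [a]) ∈ MinForbidden X n) : IsLeftConstraint X (c :: u) := by
  obtain ⟨hlen, hnot, ⟨-, x, hx, hcu⟩, ⟨-, z, hz, hua⟩⟩ := h
  rw [← List.cons_append, List.dropLast_concat] at hcu
  rw [List.tail_cons] at hua
  refine (isLeftConstraint_cons_iff hX).2 ⟨⟨x, hx, hcu⟩, fun hsub => hnot ?_⟩
  obtain ⟨x', hx', hc, hx'z⟩ := exists_extension_of_fol_subset hsub hz (occursAt_append.1 hua).1
  refine ⟨hlen, x', hx', occursAt_cons.2 ⟨hc, (occursAt_congr fun i => ?_).1 hua⟩⟩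
  rw [zero_add, zero_add, add_comm, hx'z]

theorem natCard_minForbidden_le [Finite A] (hX : MapsTo shift X X) (n : ℕ) :
    Nat.card (MinForbidden X (n + 2)) ≤ Nat.card A * Nat.card (LC X (n + 1)) := by
  have hfin : Finite (LC X (n + 1)) :=
    ((List.finite_length_eq A (n + 1)).subset fun _ hw => hw.1).to_subtype
  have hsub : MinForbidden X (n + 2) ⊆
      range fun p : A × LC X (n + 1) => (p.2 : List A) ++ [p.1] := by
    intro w hw
    obtain _ | ⟨c, v⟩ := w
    · simpa using hw.1
    obtain rfl | ⟨u, a, rfl⟩ := v.eq_nil_or_concat'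
    · simpa using hw.1
    have hlen : (c :: u).length = n + 1 := by simpa using hw.1
    exact ⟨(a, ⟨c :: u, hlen, isLeftConstraint_of_minForbidden hX hw⟩), rfl⟩
  calc Nat.card (MinForbidden X (n + 2))
      ≤ Nat.card (range fun p : A × LC X (n + 1) => (p.2 : List A) ++ [p.1]) :=
        Nat.card_mono (finite_range _) hsub
    _ ≤ Nat.card (A × LC X (n + 1)) := Finite.card_range_le _
    _ = Nat.card A * Nat.card (LC X (n + 1)) := Nat.card_prod _ _

theorem hM_le_hC [Finite A] (hX : MapsTo shift X X) : hM X ≤ hC X := by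
  rw [hM_eq_growthRate, hC_eq_growthRate]
  refine growthRate_le_of_add_le_mul (C := Nat.card A) (k := 1)
    (fun n => natCard_le_pow fun _ hw => hw.1) ?_
  filter_upwards [eventually_ge_atTop 1] with n hn
  obtain ⟨n, rfl⟩ := Nat.exists_eq_add_of_le' hn
  exact natCard_minForbidden_le hX n

theorem hCstar_le_hC [Finite A] (X : Set (ℤ → A)) : hCstar X ≤ hC X := by
  rw [hCstar_eq_growthRate, hC_eq_growthRate]
  refine growthRate_le_of_add_le_mul (C := 1) (k := 0)
    (fun n => natCard_le_pow fun _ hw => hw.1) (Eventually.of_forall fun n => ?_)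
  rw [one_mul, add_zero]
  exact Nat.card_mono ((List.finite_length_eq A n).subset fun _ hw => hw.1)
    fun _ hw => ⟨hw.1, hw.2.1⟩

end FollowerSets

/-! ### Subshifts with a neutral letter -/

/-- The sequences over `A` in which no word of `F` occurs; the subshift presented by the set `F` of
forbidden words. -/
def avoiding (F : Set (List A)) : Set (ℤ → A) :=
  {x | ∀ f ∈ F, ∀ k : ℤ, ¬ OccursAt f x k}

/-- The letter `z` is neutral for `F` if no word of `F` is empty, begins with `z` or ends with `z`.
Words avoiding `F` can then be padded by `z` on both sides to points of `avoiding F`. -/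
structure IsNeutral (z : A) (F : Set (List A)) : Prop where
  exists_cons : ∀ f ∈ F, ∃ a ≠ z, ∃ g, f = a :: g
  exists_concat : ∀ f ∈ F, ∃ b ≠ z, ∃ g, f = g ++ [b]

/-- The bi-infinite sequence `…zzz.y₀y₁y₂…`. -/
def padLeft (z : A) (y : ℕ → A) : ℤ → A
  | (n : ℕ) => y n
  | Int.negSucc _ => z

section Avoiding

variable {F : Set (List A)} {z c : A} {v w : List A}

theorem isClosed_avoiding [TopologicalSpace A] [DiscreteTopology A] (F : Set (List A)) :
    IsClosed (avoiding F) := by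
  have hopen : ∀ (f : List A) (k : ℤ), IsOpen {x | OccursAt f x k} := fun f k => by
    simp only [OccursAt, Set.ofPred_forall]
    refine isOpen_iInter_of_finite fun i => ?_
    exact (isOpen_discrete ({f.get i} : Set A)).preimage
      (continuous_apply (A := fun _ : ℤ => A) (k + (i : ℕ)))
  simp only [avoiding, Set.ofPred_forall]
  exact isClosed_iInter fun f => isClosed_iInter fun _ => isClosed_iInter fun k =>
    (hopen f k).isClosed_compl

theorem shift_image_avoiding (F : Set (List A)) : shift '' avoiding F = avoiding F := by
  have hmem : ∀ x ∈ avoiding F, ∀ l : ℤ, (fun n => x (n + l)) ∈ avoiding F := fun x hx l f hf k h =>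
    hx f hf (k + l) ((occursAt_congr fun i => by ring_nf).1 h)
  refine Subset.antisymm (image_subset_iff.2 fun x hx => hmem x hx 1) fun x hx =>
    ⟨_, hmem x hx (-1), ?_⟩
  simp [funext_iff, shift]

theorem isSubshift_avoiding [TopologicalSpace A] [DiscreteTopology A] (F : Set (List A)) :
    IsSubshift (avoiding F) :=
  ⟨isClosed_avoiding F, shift_image_avoiding F⟩

theorem mapsTo_shift_avoiding (F : Set (List A)) : MapsTo shift (avoiding F) (avoiding F) :=
  mapsTo_iff_image_subset.2 (shift_image_avoiding F).subset

theorem not_isInfix_of_occursAt {x : ℤ → A} (hx : x ∈ avoiding F) {k : ℤ} (hw : OccursAt w x k)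
    {f : List A} (hf : f ∈ F) : ¬ f <:+: w := by
  rintro ⟨s, t, rfl⟩
  rw [occursAt_append, occursAt_append] at hw
  exact hx f hf _ hw.1.2

theorem padLeft_mem_avoiding (hz : IsNeutral z F) {y : ℕ → A}
    (h : ∀ f ∈ F, ∀ k : ℕ, ¬ OccursAt f (padLeft z y) k) : padLeft z y ∈ avoiding F := by
  intro f hf k hocc
  obtain k | k := k
  · exact h f hf k hocc
  · obtain ⟨a, ha, g, rfl⟩ := hz.exists_cons f hf
    exact ha (occursAt_cons.1 hocc).1.symm

theorem occursAt_padLeft_getD (z : A) (w : List A) :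
    OccursAt w (padLeft z fun n => w.getD n z) 0 := by
  intro i
  rw [zero_add]
  exact List.getD_eq_getElem _ _ i.2

theorem padLeft_getD_mem_avoiding (hz : IsNeutral z F) (hw : ∀ f ∈ F, ¬ f <:+: w) :
    padLeft z (fun n => w.getD n z) ∈ avoiding F := by
  refine padLeft_mem_avoiding hz fun f hf k hocc => hw f hf ?_
  refine (occursAt_padLeft_getD z w).isInfix (n := k) (by rwa [zero_add]) ?_
  obtain ⟨b, hb, g, rfl⟩ := hz.exists_concat f hf
  have hlast : w.getD (k + g.length) z = b := (occursAt_cons.1 (occursAt_append.1 hocc).2).1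
  by_contra! hlt
  rw [List.length_append, List.length_singleton] at hlt
  rw [List.getD_eq_default _ _ (by omega)] at hlast
  exact hb hlast.symm

theorem exists_mem_avoiding_occursAt_iff (hz : IsNeutral z F) :
    (∃ x ∈ avoiding F, OccursAt w x 0) ↔ ∀ f ∈ F, ¬ f <:+: w :=
  ⟨fun ⟨_, hx, hw⟩ _ => not_isInfix_of_occursAt hx hw,
    fun hw => ⟨_, padLeft_getD_mem_avoiding hz hw, occursAt_padLeft_getD z w⟩⟩

theorem mem_lang_avoiding_iff (hz : IsNeutral z F) {n : ℕ} :
    w ∈ Lang (avoiding F) n ↔ w.length = n ∧ ∀ f ∈ F, ¬ f <:+: w :=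
  and_congr_right fun _ => exists_mem_avoiding_occursAt_iff hz

theorem isInfix_dropLast_or_isInfix_tail {u w : List A} (h : u <:+: w) (hne : u ≠ w) :
    u <:+: w.dropLast ∨ u <:+: w.tail := by
  obtain ⟨s, t, rfl⟩ := h
  obtain _ | ⟨a, s⟩ := s
  · obtain rfl | ⟨t, b, rfl⟩ := t.eq_nil_or_concat'
    · simp at hne
    · exact Or.inl ⟨[], t, by rw [← List.append_assoc, List.dropLast_concat]⟩
  · exact Or.inr ⟨s, t, rfl⟩

theorem not_isInfix_of_isAntichain (hF : IsAntichain (· <:+: ·) F) {u w : List A} (hw : w ∈ F)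
    (huw : u <:+: w) (hlt : u.length < w.length) : ∀ f ∈ F, ¬ f <:+: u := by
  intro f hf hfu
  obtain rfl := hF.eq hf hw (hfu.trans huw)
  exact hlt.not_ge hfu.length_le

theorem minForbidden_avoiding (hz : IsNeutral z F) (hF : IsAntichain (· <:+: ·) F) (n : ℕ) :
    MinForbidden (avoiding F) n = {w ∈ F | w.length = n} := by
  ext w
  simp only [MinForbidden, mem_lang_avoiding_iff hz, mem_ofPred_eq]
  constructor
  · rintro ⟨hlen, hnot, ⟨-, hdrop⟩, ⟨-, htail⟩⟩
    obtain ⟨f, hf, hfw⟩ : ∃ f ∈ F, f <:+: w := by simpa [hlen] using hnot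
    have hfw' : f = w := by
      by_contra hne
      exact (isInfix_dropLast_or_isInfix_tail hfw hne).elim (hdrop f hf) (htail f hf)
    exact ⟨hfw' ▸ hf, hlen⟩
  · rintro ⟨hw, rfl⟩
    have hpos : 0 < w.length := by
      obtain ⟨a, -, g, rfl⟩ := hz.exists_cons w hw
      simp
    refine ⟨rfl, fun h => h.2 w hw List.infix_rfl,
      ⟨List.length_dropLast, not_isInfix_of_isAntichain hF hw ?_ ?_⟩,
      ⟨List.length_tail, not_isInfix_of_isAntichain hF hw ?_ ?_⟩⟩
    · exact (List.dropLast_prefix w).isInfix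
    · rw [List.length_dropLast]; omega
    · exact (List.tail_suffix w).isInfix
    · rw [List.length_tail]; omega

theorem exists_append_mem_of_isLeftConstraint (hz : IsNeutral z F) (hv : v ≠ [])
    (h : IsLeftConstraint (avoiding F) (c :: v)) : ∃ s ≠ [], c :: v ++ s ∈ F := by
  obtain ⟨⟨x₀, hx₀, hcv⟩, hnot⟩ := (isLeftConstraint_cons_iff (mapsTo_shift_avoiding F)).1 h
  have hfree : ∀ f ∈ F, ¬ f <:+: c :: v := fun f => not_isInfix_of_occursAt hx₀ hcv
  by_contra! hF
  refine hnot (fol_subset_of_exists_extension hv fun x hx hocc => ?_)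
  let x' := padLeft z fun | 0 => c | j + 1 => x j
  have hx'x : ∀ j : ℕ, x' (j + 1) = x j := fun j => rfl
  have hocc' : OccursAt (c :: v) x' 0 := by
    refine occursAt_cons.2 ⟨rfl, (occursAt_congr fun i => ?_).1 hocc⟩
    rw [zero_add, zero_add, add_comm, hx'x]
  refine ⟨x', padLeft_mem_avoiding hz fun f hf k hk => ?_, rfl, hx'x⟩
  -- Prepending `c` to `x` creates no forbidden word beyond position `0`; one at position `0` would
  -- be a prefix of `c :: v` or have `c :: v` as a prefix.
  obtain _ | k := k
  · rcases le_total f.length (c :: v).length with hle | hle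
    · exact hfree f hf (OccursAt.isPrefix hk hocc' hle).isInfix
    · obtain ⟨s, rfl⟩ := hocc'.isPrefix hk hle
      obtain rfl : s = [] := by_contra fun hs => hF s hs hf
      exact hfree _ hf (by rw [List.append_nil])
  · refine hx f hf k ((occursAt_congr fun i => ?_).1 hk)
    rw [show ((k + 1 : ℕ) : ℤ) + i = (k + i : ℕ) + 1 by push_cast; ring]
    exact (hx'x (k + i)).trans (congrArg x (Nat.cast_add k i))

theorem isLeftConstraint_of_append_mem (hz : IsNeutral z F) (hF : IsAntichain (· <:+: ·) F)
    {s : List A} (hs : s ≠ []) (h : c :: v ++ s ∈ F) : IsLeftConstraint (avoiding F) (c :: v) := by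
  refine (isLeftConstraint_cons_iff (mapsTo_shift_avoiding F)).2 ⟨?_, fun hsub => ?_⟩
  · refine (exists_mem_avoiding_occursAt_iff hz).2 (not_isInfix_of_isAntichain hF h ?_ ?_)
    · exact (List.prefix_append _ _).isInfix
    · rw [List.length_append]
      exact Nat.lt_add_of_pos_right (List.length_pos_iff.2 hs)
  · obtain ⟨x, hx, hocc⟩ : ∃ x ∈ avoiding F, OccursAt (v ++ s) x 0 := by
      refine (exists_mem_avoiding_occursAt_iff hz).2 (not_isInfix_of_isAntichain hF h ?_ ?_)
      · exact (List.suffix_cons c (v ++ s)).isInfix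
      · simp
    obtain ⟨x', hx', hc, hx'x⟩ :=
      exists_extension_of_fol_subset hsub hx (occursAt_append.1 hocc).1
    refine hx' _ h 0 (occursAt_cons.2 ⟨hc, (occursAt_congr fun i => ?_).1 hocc⟩)
    rw [zero_add, zero_add, add_comm, hx'x]

end Avoiding

/-! ### Words read off from a one-sided past -/

section WordOf

variable {b : ℕ → A}

theorem wordOf_succ (b : ℕ → A) (m : ℕ) : wordOf b (m + 1) = b (m + 1) :: wordOf b m := by
  simp [wordOf, List.range_succ_eq_map (n := m + 1), Function.comp_def]

theorem mem_wordOf {m n : ℕ} (h : m ≤ n) : b m ∈ wordOf b n :=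
  List.mem_map.2 ⟨n - m, List.mem_range.2 (by omega), by rw [Nat.sub_sub_self h]⟩

theorem wordOf_getD_reverse (a c : A) (u : List A) (k : ℕ) :
    wordOf (fun j => (c :: u).reverse.getD j a) (k + u.length) =
      List.replicate k a ++ c :: u := by
  have hrev : (c :: u).reverse.length = u.length + 1 := List.length_reverse
  refine List.ext_getElem ?_ fun i hi _ => ?_
  · rw [wordOf, List.length_map, List.length_range, List.length_append, List.length_replicate,
      List.length_cons, add_assoc]
  have hi' : i < k + u.length + 1 := by simpa [wordOf] using hi
  simp only [wordOf, List.getElem_map, List.getElem_range]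
  rcases lt_or_ge i k with hik | hik
  · rw [List.getElem_append_left (by simpa using hik), List.getElem_replicate,
      List.getD_eq_default _ _ (by omega)]
  · rw [List.getElem_append_right (by simpa using hik),
      List.getD_eq_getElem _ _ (by omega), List.getElem_reverse]
    congr 1
    rw [List.length_cons, List.length_replicate]
    omega

end WordOf

/-! ### A subshift with `h*_𝒞 < h_ℳ` -/

/-- The word `2u2` over `{0, 1, 2}`, where `u` is a word over `{0, 1}`. -/
def bracketed (u : List (Fin 2)) : List (Fin 3) :=
  2 :: (u.map Fin.castSucc ++ [2])

section Bracketed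

theorem bracketed_injective : bracketed.Injective := fun u v h => by
  simpa [bracketed, (List.map_injective_iff.2 (Fin.castSucc_injective 2)).eq_iff] using h

theorem length_bracketed (u : List (Fin 2)) : (bracketed u).length = u.length + 2 := by
  simp [bracketed]

theorem isNeutral_bracketed : IsNeutral 0 (range bracketed) where
  exists_cons := by
    rintro _ ⟨u, rfl⟩
    exact ⟨2, by decide, _, rfl⟩
  exists_concat := by
    rintro _ ⟨u, rfl⟩
    exact ⟨2, by decide, 2 :: u.map Fin.castSucc, rfl⟩

theorem isAntichain_bracketed : IsAntichain (· <:+: ·) (range bracketed) := by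
  rintro _ ⟨u, rfl⟩ _ ⟨v, rfl⟩ hne h
  have hcount : ∀ u : List (Fin 2), (u.map Fin.castSucc).count 2 = 0 := fun u =>
    List.count_eq_zero_of_not_mem (by simp)
  have htwo : (bracketed u).count 2 = 2 := by simp [bracketed, hcount]
  -- `2u2` contains the letter `2` twice, a proper factor of `2v2` at most once.
  rcases isInfix_dropLast_or_isInfix_tail h hne with h | h
  · have := h.sublist.count_le 2
    rw [htwo, show (bracketed v).dropLast = 2 :: v.map Fin.castSucc from
      List.dropLast_concat (l₁ := 2 :: v.map Fin.castSucc)] at this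
    simp [hcount] at this
  · have := h.sublist.count_le 2
    rw [htwo] at this
    simp [bracketed, hcount] at this

theorem log_two_le_hM_bracketed : Real.log 2 ≤ hM (avoiding (range bracketed)) := by
  simpa [hM_eq_growthRate] using log_natCard_le_growthRate (k := 2) (fun n _ hw => hw.1)
    bracketed_injective fun u => by
      rw [minForbidden_avoiding isNeutral_bracketed isAntichain_bracketed]
      exact ⟨mem_range_self u, length_bracketed u⟩

theorem eq_two_and_notMem_of_isLeftConstraint {c : Fin 3} {v : List (Fin 3)} (hv : v ≠ [])
    (h : IsLeftConstraint (avoiding (range bracketed)) (c :: v)) : c = 2 ∧ 2 ∉ v := by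
  obtain ⟨s, hs, u, hu⟩ := exists_append_mem_of_isLeftConstraint isNeutral_bracketed hv h
  obtain ⟨hc, hvs⟩ := List.cons_eq_cons.1 hu
  refine ⟨hc.symm, fun h2 => ?_⟩
  rcases List.prefix_concat_iff.1 ⟨s, hvs.symm⟩ with heq | hpre
  · rw [heq] at hvs
    exact absurd (List.self_eq_append_right.1 hvs) hs
  · exact absurd (hpre.subset h2) (by simp)

theorem not_isExtendable_bracketed (w : List (Fin 3)) :
    ¬ IsExtendable (avoiding (range bracketed)) w := by
  rintro ⟨-, b, -, hb⟩
  have hconstraint : ∀ m, IsLeftConstraint (avoiding (range bracketed)) (wordOf b (m + 1)) →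
      b (m + 1) = 2 ∧ 2 ∉ wordOf b m := fun m hm => by
    rw [wordOf_succ] at hm
    exact eq_two_and_notMem_of_isLeftConstraint (List.ne_nil_of_mem (mem_wordOf m.zero_le)) hm
  obtain ⟨_ | m, hm, hleft⟩ := hb 1
  · omega
  obtain ⟨_ | n, hn, hleft'⟩ := hb (m + 2)
  · omega
  have hmem : b (m + 1) ∈ wordOf b n := mem_wordOf (by omega)
  rw [(hconstraint m hleft).1] at hmem
  exact (hconstraint n hleft').2 hmem

theorem hCstar_bracketed : hCstar (avoiding (range bracketed)) = 0 := by
  refine growthRate_eq_zero_of_le_self fun n => ?_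
  have : IsEmpty (ELC (avoiding (range bracketed)) n) :=
    ⟨fun w => not_isExtendable_bracketed w w.2.2⟩
  simp

end Bracketed

/-! ### A subshift with `h_ℳ < h*_𝒞` -/

/-- The word `1u0ᵏ2` over `{0, 1, 2}`, where `u` is a word over `{0, 1}` and `k = 2 ^ |u|`. -/
def padded (u : List (Fin 2)) : List (Fin 3) :=
  1 :: (u.map Fin.castSucc ++ (List.replicate (2 ^ u.length) 0 ++ [2]))

section Padded

variable {u v : List (Fin 2)}

theorem length_padded (u : List (Fin 2)) :
    (padded u).length = u.length + 2 ^ u.length + 2 := by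
  simp only [padded, List.length_cons, List.length_append, List.length_map, List.length_replicate,
    List.length_nil]
  omega

theorem length_padded_le_iff :
    (padded u).length ≤ (padded v).length ↔ u.length ≤ v.length := by
  have hmono : StrictMono fun k : ℕ => k + 2 ^ k + 2 := fun k l hkl => by
    have := Nat.pow_lt_pow_right one_lt_two hkl
    dsimp only
    omega
  rw [length_padded, length_padded]
  exact hmono.le_iff_le

theorem isNeutral_padded : IsNeutral 0 (range padded) where
  exists_cons := by
    rintro _ ⟨u, rfl⟩
    exact ⟨1, by decide, _, rfl⟩
  exists_concat := by
    rintro _ ⟨u, rfl⟩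
    exact ⟨2, by decide, 1 :: (u.map Fin.castSucc ++ List.replicate (2 ^ u.length) 0),
      by simp [padded]⟩

theorem isSuffix_padded_of_isInfix (h : padded u <:+: padded v) : padded u <:+ padded v := by
  have hconcat : padded v =
      1 :: (v.map Fin.castSucc ++ List.replicate (2 ^ v.length) 0) ++ [2] := by
    simp [padded]
  rw [hconcat] at h ⊢
  refine (List.infix_concat_iff.1 h).resolve_right fun h => ?_
  have h2 : 2 ∈ padded u := by simp [padded]
  simpa using h.subset h2

theorem not_isInfix_padded_of_length_lt (huv : u.length < v.length) :
    ¬ padded u <:+: padded v := by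
  intro h
  -- `padded u` is so short that, as a suffix of `padded v`, it would lie within `0…02`.
  have hzeros : List.replicate (2 ^ v.length) 0 ++ [2] <:+ padded v :=
    (List.suffix_append _ _).trans (List.suffix_cons _ _)
  have hlen : (padded u).length ≤ (List.replicate (2 ^ v.length) 0 ++ [(2 : Fin 3)]).length := by
    have hu : u.length < 2 ^ u.length := Nat.lt_two_pow_self
    have hv : 2 ^ (u.length + 1) ≤ 2 ^ v.length := Nat.pow_le_pow_right (by decide) huv
    rw [length_padded, List.length_append, List.length_replicate, List.length_singleton]
    omega
  have hsuffix := List.suffix_of_suffix_length_le (isSuffix_padded_of_isInfix h) hzeros hlen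
  have hone : 1 ∈ List.replicate (2 ^ v.length) 0 ++ [(2 : Fin 3)] :=
    hsuffix.subset List.mem_cons_self
  simp at hone

theorem isAntichain_padded : IsAntichain (· <:+: ·) (range padded) := by
  rintro _ ⟨u, rfl⟩ _ ⟨v, rfl⟩ hne h
  rcases (length_padded_le_iff.1 h.length_le).lt_or_eq with hlt | heq
  · exact not_isInfix_padded_of_length_lt hlt h
  · exact hne (h.eq_of_length (by rw [length_padded, length_padded, heq]))

-- The words `padded u` with `|u| = m` all have one length, which exceeds their number `2 ^ m`.
theorem natCard_minForbidden_padded_le (n : ℕ) :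
    Nat.card (MinForbidden (avoiding (range padded)) n) ≤ n := by
  rw [minForbidden_avoiding isNeutral_padded isAntichain_padded]
  obtain hempty | ⟨_, ⟨u, rfl⟩, hu⟩ := {w ∈ range padded | w.length = n}.eq_empty_or_nonempty
  · rw [hempty]
    simp
  have hsub : {w ∈ range padded | w.length = n} ⊆
      padded '' {v : List (Fin 2) | v.length = u.length} := by
    rintro _ ⟨⟨v, rfl⟩, hv⟩
    have hlen : (padded v).length = (padded u).length := hv.trans hu.symm
    exact ⟨v, (length_padded_le_iff.1 hlen.le).antisymm (length_padded_le_iff.1 hlen.ge), rfl⟩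
  calc Nat.card {w ∈ range padded | w.length = n}
      ≤ Nat.card (padded '' {v : List (Fin 2) | v.length = u.length}) :=
        Nat.card_mono ((List.finite_length_eq _ _).image _) hsub
    _ ≤ Nat.card {v : List (Fin 2) | v.length = u.length} :=
        Nat.card_image_le (List.finite_length_eq _ _)
    _ = 2 ^ u.length := by rw [natCard_length_eq, Nat.card_fin]
    _ ≤ n := by rw [← hu, length_padded]; omega

theorem hM_padded : hM (avoiding (range padded)) = 0 := by
  rw [hM_eq_growthRate]
  exact growthRate_eq_zero_of_le_self natCard_minForbidden_padded_le

theorem isLeftConstraint_padded (u : List (Fin 2)) :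
    IsLeftConstraint (avoiding (range padded)) (1 :: u.map Fin.castSucc) :=
  isLeftConstraint_of_append_mem isNeutral_padded isAntichain_padded
    (s := List.replicate (2 ^ u.length) 0 ++ [2]) (by simp) ⟨u, rfl⟩

theorem isExtendable_padded (u : List (Fin 2)) :
    IsExtendable (avoiding (range padded)) (1 :: u.map Fin.castSucc) := by
  -- The past `…111u` works.
  have hpast := wordOf_getD_reverse (1 : Fin 3) 1 (u.map Fin.castSucc)
  refine ⟨isLeftConstraint_padded u, fun j => (1 :: u.map Fin.castSucc).reverse.getD j 1,
    by simpa using hpast 0, fun N => ⟨N + (u.map Fin.castSucc).length, le_self_add, ?_⟩⟩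
  have hones : List.replicate N 1 ++ 1 :: u.map Fin.castSucc =
      1 :: (List.replicate N 1 ++ u).map Fin.castSucc := by
    rw [List.map_append, List.map_replicate, List.append_cons, ← List.replicate_succ']
    rfl
  rw [hpast N, hones]
  exact isLeftConstraint_padded _

theorem log_two_le_hCstar_padded : Real.log 2 ≤ hCstar (avoiding (range padded)) := by
  simpa [hCstar_eq_growthRate] using log_natCard_le_growthRate
    (T := ELC (avoiding (range padded))) (k := 1) (fun n _ hw => hw.1)
    (List.cons_injective.comp (List.map_injective_iff.2 (Fin.castSucc_injective 2)))
    fun u => ⟨by simp, isExtendable_padded u⟩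

end Padded

theorem minForbidden_entropy_vs_constraint_entropy_general :
    (∀ (A : Type*) [Finite A] (X : Set (ℤ → A)), MapsTo shift X X → hM X ≤ hC X) ∧
    (∃ X : Set (ℤ → Fin 3), IsSubshift X ∧ hM X = 0 ∧ Real.log 2 ≤ hCstar X) ∧
    (∃ X : Set (ℤ → Fin 3), IsSubshift X ∧ hCstar X = 0 ∧ Real.log 2 ≤ hM X) :=
  ⟨fun _ _ _ => hM_le_hC,
    ⟨_, isSubshift_avoiding _, hM_padded, log_two_le_hCstar_padded⟩,
    ⟨_, isSubshift_avoiding _, hCstar_bracketed, log_two_le_hM_bracketed⟩⟩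

/-- For every subshift `h_ℳ(X) ≤ h_𝒞(X)`, with strict
inequality for some subshift; moreover both `h_ℳ(X) > h*_𝒞(X)` and
`h_ℳ(X) < h*_𝒞(X)` occur. -/
theorem minForbidden_entropy_vs_constraint_entropy :
    (∀ (A : Type) [Fintype A] [TopologicalSpace A] [DiscreteTopology A]
        (X : Set (ℤ → A)), IsSubshift X → hM X ≤ hC X) ∧
    (∃ (A : Type) (_ : Fintype A) (X : Set (ℤ → A)),
        (letI : TopologicalSpace A := ⊥
         IsSubshift X) ∧ hM X < hC X) ∧
    (∃ (A : Type) (_ : Fintype A) (X : Set (ℤ → A)),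
        (letI : TopologicalSpace A := ⊥
         IsSubshift X) ∧ hCstar X < hM X) ∧
    (∃ (A : Type) (_ : Fintype A) (X : Set (ℤ → A)),
        (letI : TopologicalSpace A := ⊥
         IsSubshift X) ∧ hM X < hCstar X) := by
  obtain ⟨hle, ⟨X, hX, hXM, hXC⟩, ⟨Y, hY, hYC, hYM⟩⟩ :=
    minForbidden_entropy_vs_constraint_entropy_general
  have hlog : 0 < Real.log 2 := Real.log_pos one_lt_two
  have hX_lt : hM X < hCstar X := by rw [hXM]; exact hlog.trans_le hXC
  have hY_lt : hCstar Y < hM Y := by rw [hYC]; exact hlog.trans_le hYM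
  exact ⟨fun A _ _ _ Z hZ => hle A Z (mapsTo_iff_image_subset.2 hZ.2.subset),
    ⟨Fin 3, inferInstance, X, hX, hX_lt.trans_le (hCstar_le_hC X)⟩,
    ⟨Fin 3, inferInstance, Y, hY, hY_lt⟩, ⟨Fin 3, inferInstance, X, hX, hX_lt⟩⟩

end QFTPaper
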